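/- Let 1 < p < 2 and define γ(t) = exp(p t^{p−1}) ∫_t^∞ exp(−p s^{p−1}) ds for t ≥ 0. Then for every t ≥ 0 one has (t + γ(t))^p − t^p − p t^{p−1} γ(t) ≥ γ(0)/2. -/

import Mathlib

/-! Put `q = 1 / (p - 1) > 1`, `a = t ^ (p - 1)` and `M a k = ∫₀^∞ e^{-u} (a + u / p) ^ k du`.
The substitution `s = (a + u / p) ^ q` in the integral defining `γ` gives `γ t = (q / p) M a (q - 1)`,
and an integration by parts turns this into `t + γ t = M a q`.

Two bounds on these moments suffice.
* Under the exponential law `a + u / p` has mean `a + 1 / p`, so Jensen's inequality for `x ↦ x ^ q`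
  gives `t + γ t ≥ (a + 1 / p) ^ q`, that is `(t + γ t) ^ (p - 1) ≥ a + 1 / p`
  (`rpow_le_expMoment`).
* `M a q - a M a (q - 1) = ∫₀^∞ e^{-u} (u / p) (a + u / p) ^ (q - 1) du` is smallest at `a = 0`, where
  it equals `M 0 q = γ 0` (`expMoment_zero_le`).

Since `p (p - 1) γ t = M a (q - 1)`, the first bound yields
`(t + γ)^p - t^p - p a γ ≥ (t + γ)(a + 1 / p) - t a - p a γ = (M a q - a M a (q - 1)) / p`,
and the second bounds this below by `γ 0 / p ≥ γ 0 / 2`. -/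

open Real MeasureTheory Set

/-- The function `γ(t) = exp(p t^{p−1}) ∫_t^∞ exp(−p s^{p−1}) ds`. -/
noncomputable def gam (p : ℝ) (t : ℝ) : ℝ :=
  Real.exp (p * t ^ (p - 1)) * ∫ s in Ioi t, Real.exp (-p * s ^ (p - 1))

/-- The moment `∫₀^∞ e^{-u} (a + u / p) ^ k du` of the exponential law, after an affine change of
variable. -/
noncomputable def expMoment (p a k : ℝ) : ℝ :=
  ∫ u in Ioi (0 : ℝ), Real.exp (-u) * (a + u / p) ^ k

lemma integrableOn_expMoment {p a k : ℝ} (hp : 0 < p) (ha : 0 ≤ a) (hk : 0 ≤ k) :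
    IntegrableOn (fun u : ℝ => Real.exp (-u) * (a + u / p) ^ k) (Ioi 0) := by
  have hX : ContinuousOn (fun u : ℝ => Real.exp (-u) * (a + u / p) ^ k) (Ici 0) :=
    (by fun_prop : Continuous fun u : ℝ => Real.exp (-u)).continuousOn.mul
      ((by fun_prop : Continuous fun u : ℝ => a + u / p).continuousOn.rpow_const
        fun _ _ => Or.inr hk)
  -- Compare with the Gamma integrand `e^{-u} u ^ k` and with `e^{-u}`.
  have h1 : IntegrableOn (fun u : ℝ => Real.exp (-u) * u ^ (k + 1 - 1)) (Ioi 0) :=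
    Real.GammaIntegral_convergent (by linarith)
  rw [add_sub_cancel_right] at h1
  have h0 : IntegrableOn (fun u : ℝ => Real.exp (-u)) (Ioi 0) := by
    simpa using Real.GammaIntegral_convergent one_pos
  refine Integrable.mono' ((h0.mul_const ((2 * a) ^ k)).add (h1.mul_const ((2 / p) ^ k)))
    ((hX.mono Ioi_subset_Ici_self).aestronglyMeasurable measurableSet_Ioi) ?_
  refine (ae_restrict_iff' measurableSet_Ioi).2 (Filter.Eventually.of_forall fun u hu => ?_)
  have hu : 0 < u := hu
  have hup : 0 < u / p := by positivity
  rw [Real.norm_of_nonneg (by positivity)]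
  have key : (a + u / p) ^ k ≤ (2 * a) ^ k + u ^ k * (2 / p) ^ k := by
    rw [← Real.mul_rpow hu.le (by positivity)]
    rcases le_total a (u / p) with h | h
    · have : (a + u / p) ^ k ≤ (u * (2 / p)) ^ k :=
        Real.rpow_le_rpow (by positivity) (by
          have : u * (2 / p) = u / p + u / p := by ring
          linarith) hk
      have : 0 ≤ (2 * a) ^ k := by positivity
      linarith
    · have : (a + u / p) ^ k ≤ (2 * a) ^ k :=
        Real.rpow_le_rpow (by positivity) (by linarith) hk
      have : 0 ≤ (u * (2 / p)) ^ k := by positivity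
      linarith
  have := mul_le_mul_of_nonneg_left key (Real.exp_pos (-u)).le
  simp only [Pi.add_apply]
  linarith

/-- Integration by parts for the exponential moments. -/
lemma expMoment_eq {p a k : ℝ} (hp : 0 < p) (ha : 0 ≤ a) (hk : 1 ≤ k) :
    expMoment p a k = a ^ k + k / p * expMoment p a (k - 1) := by
  have i1 := integrableOn_expMoment hp ha (k := k) (by linarith)
  have i2 := (integrableOn_expMoment hp ha (k := k - 1) (by linarith)).const_mul (k / p)
  have hd : ∀ u ∈ Ici (0 : ℝ), HasDerivAt (fun u : ℝ => Real.exp (-u) * (a + u / p) ^ k)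
      (k / p * (Real.exp (-u) * (a + u / p) ^ (k - 1)) - Real.exp (-u) * (a + u / p) ^ k) u := by
    intro u _
    have e : HasDerivAt (fun u : ℝ => Real.exp (-u)) (Real.exp (-u) * -1) u :=
      (hasDerivAt_neg u).exp
    have l : HasDerivAt (fun u : ℝ => a + u / p) (1 / p) u :=
      ((hasDerivAt_id u).div_const p).const_add a
    refine (e.fun_mul (l.rpow_const (p := k) (Or.inr hk))).congr_deriv ?_
    ring
  have ht := tendsto_zero_of_hasDerivAt_of_integrableOn_Ioi
    (fun u hu => hd u (Ioi_subset_Ici_self hu)) (i2.sub i1) i1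
  have h := integral_Ioi_of_hasDerivAt_of_tendsto' hd (i2.sub i1) ht
  rw [integral_sub i2 i1, integral_const_mul] at h
  simp only [neg_zero, Real.exp_zero, zero_div, add_zero, one_mul, zero_sub] at h
  unfold expMoment
  linarith

lemma expMoment_zero_right (p a : ℝ) : expMoment p a 0 = 1 := by
  simp only [expMoment, Real.rpow_zero, mul_one, integral_exp_neg_Ioi_zero]

/-- Jensen's inequality for `x ↦ x ^ k`, obtained by integrating the tangent line bound at the
mean `a + 1 / p`. -/
lemma rpow_le_expMoment {p a k : ℝ} (hp : 0 < p) (ha : 0 ≤ a) (hk : 1 ≤ k) :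
    (a + 1 / p) ^ k ≤ expMoment p a k := by
  set c := a + 1 / p with hc
  have hc0 : 0 < c := by positivity
  have m1 : expMoment p a 1 = c := by
    rw [expMoment_eq hp ha le_rfl, sub_self, expMoment_zero_right, Real.rpow_one, mul_one]
  have i0 := integrableOn_expMoment hp ha (k := 0) le_rfl
  have i1 := integrableOn_expMoment hp ha (k := 1) zero_le_one
  have ik := integrableOn_expMoment hp ha (k := k) (by linarith)
  have j := (i0.const_mul (c ^ k * (1 - k))).add (i1.const_mul (c ^ k * k / c))
  have h := setIntegral_mono_on j ik measurableSet_Ioi (fun u hu => by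
    have hu : 0 < u := hu
    have hX : 0 < a + u / p := by positivity
    have b := one_add_mul_self_le_rpow_one_add (s := (a + u / p) / c - 1)
      (by have : 0 < (a + u / p) / c := by positivity
          linarith) hk
    rw [add_sub_cancel, Real.div_rpow hX.le hc0.le, le_div_iff₀ (by positivity)] at b
    have := mul_le_mul_of_nonneg_left b (Real.exp_pos (-u)).le
    simp only [Pi.add_apply, Real.rpow_zero, Real.rpow_one]
    refine le_trans (le_of_eq ?_) this
    ring)
  simp only [Pi.add_apply] at h
  rw [integral_add (i0.const_mul _) (i1.const_mul _), integral_const_mul, integral_const_mul] at h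
  change _ * expMoment p a 0 + _ * expMoment p a 1 ≤ expMoment p a k at h
  rw [expMoment_zero_right, m1, div_mul_cancel₀ _ hc0.ne'] at h
  linarith

lemma expMoment_zero_le {p a k : ℝ} (hp : 0 < p) (ha : 0 ≤ a) (hk : 1 ≤ k) :
    expMoment p 0 k ≤ expMoment p a k - a * expMoment p a (k - 1) := by
  have i0 := integrableOn_expMoment hp le_rfl (k := k) (by linarith)
  have i1 := integrableOn_expMoment hp ha (k := k) (by linarith)
  have i2 := (integrableOn_expMoment hp ha (k := k - 1) (by linarith)).const_mul a
  unfold expMoment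
  rw [← integral_const_mul, ← integral_sub i1 i2]
  refine setIntegral_mono_on i0 (i1.sub i2) measurableSet_Ioi fun u hu => ?_
  have hu : 0 < u := hu
  have hup : 0 < u / p := by positivity
  have hX : 0 < a + u / p := by positivity
  have e1 : (a + u / p) ^ k = (a + u / p) ^ (k - 1) * (a + u / p) := by
    rw [← Real.rpow_add_one hX.ne', sub_add_cancel]
  have e2 : (u / p) ^ k = (u / p) ^ (k - 1) * (u / p) := by
    rw [← Real.rpow_add_one hup.ne', sub_add_cancel]
  have hm : (u / p) ^ (k - 1) ≤ (a + u / p) ^ (k - 1) :=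
    Real.rpow_le_rpow hup.le (by linarith) (by linarith)
  have := mul_le_mul_of_nonneg_left (mul_le_mul_of_nonneg_right hm hup.le) (Real.exp_pos (-u)).le
  simp only [zero_add]
  rw [e1, e2]
  linarith

/-- The substitution `s = (t ^ (p - 1) + u / p) ^ (1 / (p - 1))` in the integral defining `γ`. -/
lemma gam_eq {p t : ℝ} (hp1 : 1 < p) (ht : 0 ≤ t) :
    gam p t = 1 / (p - 1) / p * expMoment p (t ^ (p - 1)) (1 / (p - 1) - 1) := by
  set a := t ^ (p - 1) with ha_def
  set q := 1 / (p - 1) with hq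
  have hp0 : 0 < p := by linarith
  have hp1' : 0 < p - 1 := by linarith
  have hq0 : 0 < q := by positivity
  have hqp : q * (p - 1) = 1 := by rw [hq]; field_simp
  have ha : 0 ≤ a := by positivity
  have hX : ∀ u ∈ Ioi (0 : ℝ), 0 < a + u / p := fun u hu => by
    have : 0 < u / p := div_pos hu hp0
    linarith
  have haq : a ^ q = t := by
    rw [ha_def, ← Real.rpow_mul ht, mul_comm, hqp, Real.rpow_one]
  have himg : (fun u : ℝ => (a + u / p) ^ q) '' Ioi 0 = Ioi t := by
    ext s
    constructor
    · rintro ⟨u, hu, rfl⟩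
      have : 0 < u / p := div_pos hu hp0
      change t < (a + u / p) ^ q
      conv_lhs => rw [← haq]
      exact Real.rpow_lt_rpow ha (by linarith) hq0
    · intro hs
      have hs : t < s := hs
      have hlt : a < s ^ (p - 1) := Real.rpow_lt_rpow ht hs hp1'
      refine ⟨p * (s ^ (p - 1) - a), mul_pos hp0 (by linarith), ?_⟩
      change (a + p * (s ^ (p - 1) - a) / p) ^ q = s
      rw [mul_div_cancel_left₀ _ hp0.ne', add_sub_cancel, ← Real.rpow_mul (ht.trans hs.le),
        mul_comm, hqp, Real.rpow_one]
  have hinj : InjOn (fun u : ℝ => (a + u / p) ^ q) (Ioi 0) := by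
    refine StrictMonoOn.injOn fun u hu v hv huv => ?_
    exact Real.rpow_lt_rpow (hX u hu).le (by gcongr) hq0
  have hd : ∀ u ∈ Ioi (0 : ℝ), HasDerivWithinAt (fun u : ℝ => (a + u / p) ^ q)
      (1 / p * q * (a + u / p) ^ (q - 1)) (Ioi 0) u := fun u hu =>
    ((((hasDerivAt_id u).div_const p).const_add a).rpow_const
      (Or.inl (hX u hu).ne')).hasDerivWithinAt
  unfold gam expMoment
  rw [← himg, integral_image_eq_integral_abs_deriv_smul measurableSet_Ioi hd hinj,
    ← integral_const_mul, ← integral_const_mul]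
  refine setIntegral_congr_fun measurableSet_Ioi fun u hu => ?_
  have hXu := hX u hu
  simp only [smul_eq_mul]
  rw [abs_of_pos (by positivity), ← Real.rpow_mul hXu.le, hqp, Real.rpow_one]
  have : Real.exp (-u) = Real.exp (p * a) * Real.exp (-p * (a + u / p)) := by
    rw [← Real.exp_add]
    congr 1
    field_simp
    ring
  rw [this]
  ring

/-- For `1 < p < 2`, `(t + γ(t))^p − t^p − p t^{p−1} γ(t) ≥ γ(0)/2` for all `t ≥ 0`. -/
theorem stmt_14 (p : ℝ) (hp1 : 1 < p) (hp2 : p < 2) :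
    ∀ t : ℝ, 0 ≤ t →
      gam p 0 / 2 ≤ (t + gam p t) ^ p - t ^ p - p * t ^ (p - 1) * gam p t := by
  intro t ht
  have hp0 : 0 < p := by linarith
  have hp1' : 0 < p - 1 := by linarith
  have hq1 : 1 ≤ 1 / (p - 1) := by rw [le_div_iff₀ hp1']; linarith
  have g0 := gam_eq hp1 le_rfl
  have gt := gam_eq hp1 ht
  rw [Real.zero_rpow hp1'.ne'] at g0
  have hnonneg : 0 ≤ gam p 0 :=
    mul_nonneg (Real.exp_pos _).le (setIntegral_nonneg measurableSet_Ioi fun _ _ =>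
      (Real.exp_pos _).le)
  have hta : t ^ p = t * t ^ (p - 1) := by
    conv_lhs => rw [show p = 1 + (p - 1) by ring]
    rw [Real.rpow_add_of_nonneg ht zero_le_one hp1'.le, Real.rpow_one]
  have haq : (t ^ (p - 1)) ^ (1 / (p - 1)) = t := by
    rw [one_div, Real.rpow_rpow_inv ht hp1'.ne']
  have ha : 0 ≤ t ^ (p - 1) := by positivity
  generalize t ^ (p - 1) = a at *
  have b0 := expMoment_eq hp0 le_rfl hq1
  rw [Real.zero_rpow (by positivity), zero_add, ← g0] at b0
  have bt := expMoment_eq hp0 ha hq1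
  rw [haq, ← gt] at bt
  have hJ := rpow_le_expMoment hp0 ha hq1
  have hM := expMoment_zero_le hp0 ha hq1
  have hγ : expMoment p a (1 / (p - 1) - 1) = p * (p - 1) * gam p t := by
    rw [gt]
    field_simp
  rw [b0, bt, hγ] at hM
  rw [bt] at hJ
  generalize gam p t = γ at *
  have hc : 0 < a + 1 / p := by positivity
  have hx : 0 < t + γ := lt_of_lt_of_le (by positivity) hJ
  have hxp : a + 1 / p ≤ (t + γ) ^ (p - 1) := by
    have := Real.rpow_le_rpow (by positivity) hJ hp1'.le
    rwa [one_div (p - 1), Real.rpow_inv_rpow hc.le hp1'.ne'] at this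
  have hxx : (t + γ) ^ p = (t + γ) * (t + γ) ^ (p - 1) := by
    rw [mul_comm, ← Real.rpow_add_one hx.ne', sub_add_cancel]
  have h1 := mul_le_mul_of_nonneg_left hxp hx.le
  have h2 : gam p 0 / 2 ≤ gam p 0 / p := div_le_div_of_nonneg_left hnonneg hp0 hp2.le
  have h3 : gam p 0 / p ≤ (t + γ - a * (p * (p - 1) * γ)) / p := by gcongr
  have h4 : (t + γ - a * (p * (p - 1) * γ)) / p
      = (t + γ) * (a + 1 / p) - t * a - p * a * γ := by
    field_simp
    ring
  rw [hxx, hta]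
  linarith
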